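/- Fix p > 1, r ∈ (p + 2/3, 5p/3), and set α = 9(p−1)/(5p−3r). Then there is a constant C = C(p, r) such that every nonnegative Schwartz-class function g : ℝ³ → ℝ satisfies ∫_{ℝ³} g^r dv ≤ C ( ∫_{ℝ³} ⟨v⟩^{−3} |∇(g^{p/2})|² dv + ∫_{ℝ³} g^p dv ) · ( ∫_{ℝ³} g^p dv )^{(r−p−2/3)/(p−1)} · ( ∫_{ℝ³} ⟨v⟩^α g dv )^{(5p−3r)/(3(p−1))}. -/

import Mathlib

open MeasureTheory Real Filter Set

noncomputable section

/-- Velocity space ℝ³. -/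
abbrev V3 : Type := EuclideanSpace ℝ (Fin 3)

/-- Japanese bracket ⟨v⟩ = (1+|v|²)^{1/2}. -/
def jap (v : V3) : ℝ := Real.sqrt (1 + ‖v‖ ^ 2)

/-- Partial derivative in the i-th coordinate direction. -/
def pd (i : Fin 3) (g : V3 → ℝ) (v : V3) : ℝ :=
  fderiv ℝ g v (EuclideanSpace.single i 1)

/-- Projection matrix Π(z) = Id − z⊗z/|z|². -/
def projPi (z : V3) (i j : Fin 3) : ℝ :=
  (if i = j then (1 : ℝ) else 0) - z i * z j / ‖z‖ ^ 2

/-- Landau–Coulomb diffusion matrix A[f]. -/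
def coeffA (f : V3 → ℝ) (v : V3) (i j : Fin 3) : ℝ :=
  (8 * π)⁻¹ * ∫ w : V3, projPi (v - w) i j / ‖v - w‖ * f w

/-- Newtonian potential a[f] = (−Δ)⁻¹ f. -/
def coeffa (f : V3 → ℝ) (v : V3) : ℝ :=
  (4 * π)⁻¹ * ∫ w : V3, f w / ‖v - w‖

/-- The homogeneous Landau–Coulomb equation
    ∂_t f = ∇·(A[f]∇f − f ∇a[f]), pointwise at (t,v). -/
def LandauEqAt (f : ℝ → V3 → ℝ) (t : ℝ) (v : V3) : Prop :=
  deriv (fun s => f s v) t =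
    ∑ i : Fin 3, pd i
      (fun w => (∑ j : Fin 3, coeffA (f t) w i j * pd j (f t) w)
        - f t w * pd i (coeffa (f t)) w) v

/-- Normalization: unit mass, zero momentum, energy 3. -/
def IsNormalized (f : V3 → ℝ) : Prop :=
  (∫ v : V3, f v) = 1 ∧ (∀ i : Fin 3, (∫ v : V3, f v * v i) = 0) ∧
    (∫ v : V3, f v * ‖v‖ ^ 2) = 3

/-- Schwartz class function. -/
def IsSchwartz (g : V3 → ℝ) : Prop := ∃ h : SchwartzMap V3 ℝ, ⇑h = g

/-- Distributional (weak) solution of the Landau–Coulomb equation on (0,T). -/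
def IsWeakLandauSolution (T : ℝ) (g : ℝ → V3 → ℝ) : Prop :=
  ∀ φ : ℝ × V3 → ℝ, ContDiff ℝ (⊤ : ℕ∞) φ → HasCompactSupport φ →
    (Function.support φ ⊆ Set.Ioo 0 T ×ˢ (Set.univ : Set V3)) →
    (∫ t in Set.Ioo 0 T, ∫ v : V3, φ (t, v) * deriv (fun s => g s v) t) =
      - ∫ t in Set.Ioo 0 T, ∫ v : V3, ∑ i : Fin 3,
          (fderiv ℝ φ (t, v) (0, EuclideanSpace.single i 1)) *
          ((∑ j : Fin 3, coeffA (g t) v i j * pd j (g t) v)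
            - g t v * pd i (coeffa (g t)) v)

/-- Membership in L^r(0,T;L^p(ℝ³)). -/
def MemLrLp (r p T : ℝ) (g : ℝ → V3 → ℝ) : Prop :=
  (∀ᵐ t ∂(volume.restrict (Set.Ioo 0 T)), Integrable (fun v : V3 => |g t v| ^ p)) ∧
  IntegrableOn (fun t => (∫ v : V3, |g t v| ^ p) ^ (r / p)) (Set.Ioo 0 T)

/-- g ∈ W^{1,∞}(Ω) for every Ω compactly contained in (0,T] × ℝ³,
    i.e. g is Lipschitz on every compact subset of (0,T] × ℝ³. -/
def LocLipschitz (T : ℝ) (g : ℝ → V3 → ℝ) : Prop :=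
  ∀ K : Set (ℝ × V3), IsCompact K → K ⊆ Set.Ioc 0 T ×ˢ (Set.univ : Set V3) →
    ∃ L : NNReal, LipschitzOnWith L (fun q : ℝ × V3 => g q.1 q.2) K

lemma aux_taylor (g : SchwartzMap V3 ℝ) : ∃ B : ℝ, 0 < B ∧ ∀ v h : V3,
    |g (v + h) - g v - fderiv ℝ g v h| ≤ B * ‖h‖ ^ 2 := by
  let D : SchwartzMap V3 (V3 →L[ℝ] ℝ) := SchwartzMap.fderivCLM ℝ V3 ℝ g
  have hD : ∀ x, D x = fderiv ℝ g x := fun x => rfl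
  obtain ⟨C, hC, hb⟩ := D.decay 0 1
  refine ⟨C, hC, fun v h => ?_⟩
  have hdD : ∀ x, ‖fderiv ℝ D x‖ ≤ C := by
    intro x
    have := hb x
    rwa [pow_zero, one_mul, norm_iteratedFDeriv_one] at this
  have key : ∀ x ∈ Metric.closedBall v ‖h‖, ‖fderiv ℝ g x - fderiv ℝ g v‖ ≤ C * ‖h‖ := by
    intro x hx
    have h1 := Convex.norm_image_sub_le_of_norm_fderiv_le (𝕜 := ℝ) (f := D) (s := Set.univ)
      (C := C) (x := v) (y := x) (fun y _ => D.differentiableAt) (fun y _ => hdD y)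
      convex_univ (Set.mem_univ _) (Set.mem_univ _)
    rw [hD, hD] at h1
    refine h1.trans ?_
    rw [Metric.mem_closedBall, dist_eq_norm] at hx
    gcongr
  have := Convex.norm_image_sub_le_of_norm_fderiv_le' (𝕜 := ℝ) (f := g) (x := v) (y := v + h)
    (fun y _ => g.differentiableAt) key (convex_closedBall _ _)
    (Metric.mem_closedBall_self (norm_nonneg _)) (by simp [dist_eq_norm])
  rw [add_sub_cancel_left, Real.norm_eq_abs] at this
  calc _ ≤ _ := this
    _ = _ := by ring

lemma aux_grad (g : SchwartzMap V3 ℝ) (hg : ∀ v, 0 ≤ g v) : ∃ B : ℝ, 0 < B ∧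
    (∀ v h : V3, |g (v + h) - g v - fderiv ℝ g v h| ≤ B * ‖h‖ ^ 2) ∧
    ∀ v, ‖fderiv ℝ g v‖ ≤ 2 * √(B * g v) := by
  obtain ⟨B, hB, hT⟩ := aux_taylor g
  refine ⟨B, hB, hT, fun v => ?_⟩
  refine ContinuousLinearMap.opNorm_le_bound _ (by positivity) fun e => ?_
  have hs := Real.sqrt_nonneg (B * g v)
  have hs2 := Real.sq_sqrt (mul_nonneg hB.le (hg v))
  rw [Real.norm_eq_abs]
  have hquad : ∀ t : ℝ, 0 ≤ (B * ‖e‖ ^ 2) * (t * t) + (fderiv ℝ g v e) * t + g v := by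
    intro t
    have h1 := (abs_le.1 (hT v (t • e))).2
    have h2 := hg (v + t • e)
    rw [map_smul, norm_smul, mul_pow, Real.norm_eq_abs, sq_abs, smul_eq_mul] at h1
    nlinarith
  have hd := discrim_le_zero hquad
  unfold discrim at hd
  apply abs_le_of_sq_le_sq _ (by positivity)
  calc (fderiv ℝ g v e) ^ 2 ≤ 4 * (B * g v) * ‖e‖ ^ 2 := by linarith
    _ = 4 * √(B * g v) ^ 2 * ‖e‖ ^ 2 := by rw [hs2]
    _ = _ := by ring

lemma aux_hasFDeriv (g : SchwartzMap V3 ℝ) (hg : ∀ v, 0 ≤ g v) (p : ℝ) (hp : 1 < p) (v : V3) :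
    HasFDerivAt (fun w => g w ^ (p / 2)) ((p / 2 * g v ^ (p / 2 - 1)) • fderiv ℝ g v) v := by
  obtain ⟨B, hB, hT, hG⟩ := aux_grad g hg
  rcases (hg v).eq_or_lt with h0 | h0
  · have hz : fderiv ℝ g v = 0 := by
      have := hG v
      rw [← h0] at this
      simpa using this
    rw [hz, smul_zero, hasFDerivAt_iff_isLittleO_nhds_zero]
    have hp0 : p / 2 ≠ 0 := by positivity
    simp only [← h0, Real.zero_rpow hp0, sub_zero, zero_apply]
    have h1 : (fun h : V3 => g (v + h) ^ (p / 2)) =O[nhds 0] (fun h : V3 => ‖h‖ ^ p) := by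
      refine Asymptotics.IsBigO.of_bound (B ^ (p / 2)) (Eventually.of_forall fun h => ?_)
      have h2 := (abs_le.1 (hT v h)).2
      rw [← h0, hz] at h2
      simp only [sub_zero, zero_apply] at h2
      rw [Real.norm_of_nonneg (Real.rpow_nonneg (hg _) _),
        Real.norm_of_nonneg (Real.rpow_nonneg (norm_nonneg _) _)]
      calc g (v + h) ^ (p / 2) ≤ (B * ‖h‖ ^ 2) ^ (p / 2) :=
            Real.rpow_le_rpow (hg _) h2 (by positivity)
        _ = _ := by
          rw [Real.mul_rpow hB.le (by positivity), ← Real.rpow_natCast, ← Real.rpow_mul (norm_nonneg _)]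
          congr 2
          push_cast; ring
    refine h1.trans_isLittleO ?_
    have h3 : (fun h : V3 => ‖h‖ ^ p) = fun h : V3 => ‖h‖ ^ (p - 1) * ‖h‖ := by
      funext h
      rcases (norm_nonneg h).eq_or_lt with hh | hh
      · rw [← hh, Real.zero_rpow (by linarith), mul_zero]
      · rw [← Real.rpow_add_one hh.ne']; simp
    rw [h3]
    have h4 : (fun h : V3 => ‖h‖ ^ (p - 1)) =o[nhds 0] (fun _ : V3 => (1 : ℝ)) := by
      rw [Asymptotics.isLittleO_one_iff]
      have : Continuous fun h : V3 => ‖h‖ ^ (p - 1) :=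
        continuous_norm.rpow_const (fun _ => Or.inr (by linarith))
      have h5 := this.tendsto 0
      rwa [norm_zero, Real.zero_rpow (by linarith)] at h5
    have h6 := h4.mul_isBigO (Asymptotics.isBigO_refl (fun h : V3 => ‖h‖) (nhds 0))
    simp only [one_mul] at h6
    exact h6.of_norm_right
  · exact g.differentiableAt.hasFDerivAt.rpow_const (Or.inl h0.ne')

lemma aux_fderiv_bound (g : SchwartzMap V3 ℝ) (hg : ∀ v, 0 ≤ g v) (p : ℝ) (hp : 1 < p) :
    ∃ K : ℝ, 0 < K ∧ ∀ v, ‖fderiv ℝ (fun w => g w ^ (p / 2)) v‖ ≤ K * g v ^ ((p - 1) / 2) := by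
  obtain ⟨B, hB, hT, hG⟩ := aux_grad g hg
  refine ⟨p * √B, by positivity, fun v => ?_⟩
  rw [(aux_hasFDeriv g hg p hp v).fderiv, norm_smul]
  rcases (hg v).eq_or_lt with h0 | h0
  · have hz : fderiv ℝ g v = 0 := by
      have := hG v
      rw [← h0] at this
      simpa using this
    rw [hz, norm_zero, mul_zero]
    have := Real.rpow_nonneg (hg v) ((p - 1) / 2)
    positivity
  · rw [Real.norm_of_nonneg (by positivity)]
    calc _ ≤ p / 2 * g v ^ (p / 2 - 1) * (2 * √(B * g v)) := by gcongr; exact hG v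
      _ = p * √B * (g v ^ (p / 2 - 1) * g v ^ (1 / 2 : ℝ)) := by
        rw [Real.sqrt_mul hB.le, Real.sqrt_eq_rpow (g v)]; ring
      _ = _ := by rw [← Real.rpow_add h0]; congr 2; ring

lemma aux_contDiff (g : SchwartzMap V3 ℝ) (hg : ∀ v, 0 ≤ g v) (p : ℝ) (hp : 1 < p) :
    ContDiff ℝ 1 (fun w => g w ^ (p / 2)) := by
  rw [contDiff_one_iff_fderiv]
  refine ⟨fun v => (aux_hasFDeriv g hg p hp v).differentiableAt, ?_⟩
  obtain ⟨K, hK, hb⟩ := aux_fderiv_bound g hg p hp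
  rw [continuous_iff_continuousAt]
  intro v
  have hgc : Continuous fun w => g w := g.continuous
  rcases (hg v).eq_or_lt with h0 | h0
  · have hc : Continuous fun w => K * g w ^ ((p - 1) / 2) :=
      continuous_const.mul (hgc.rpow_const fun _ => Or.inr (by linarith))
    have ht := hc.tendsto v
    have hz : K * g v ^ ((p - 1) / 2) = 0 := by
      rw [← h0, Real.zero_rpow (by linarith), mul_zero]
    have hv : fderiv ℝ (fun w => g w ^ (p / 2)) v = 0 := by
      have := hb v
      rw [hz] at this
      simpa using this
    rw [hz] at ht
    rw [ContinuousAt, hv]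
    exact squeeze_zero_norm hb ht
  · have : fderiv ℝ (fun w => g w ^ (p / 2)) =
        fun v => (p / 2 * g v ^ (p / 2 - 1)) • fderiv ℝ g v :=
      funext fun v => (aux_hasFDeriv g hg p hp v).fderiv
    rw [this]
    refine ContinuousAt.smul (continuousAt_const.mul (hgc.continuousAt.rpow_const (Or.inl h0.ne'))) ?_
    exact ((g.smooth 1).continuous_fderiv (by norm_num)).continuousAt

lemma jap_pos (v : V3) : 0 < jap v := Real.sqrt_pos.2 (by positivity)

lemma one_le_jap (v : V3) : 1 ≤ jap v := by
  unfold jap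
  rw [Real.one_le_sqrt]
  nlinarith [sq_nonneg ‖v‖]

lemma jap_le (v : V3) : jap v ≤ 1 + ‖v‖ := by
  unfold jap
  rw [Real.sqrt_le_left (by positivity)]
  nlinarith [norm_nonneg v]

lemma continuous_jap_rpow (a : ℝ) : Continuous fun v : V3 => jap v ^ a := by
  have : Continuous jap := by unfold jap; fun_prop
  exact this.rpow_const fun v => Or.inl (jap_pos v).ne'

lemma aux_integrable (g : SchwartzMap V3 ℝ) (hg : ∀ v, 0 ≤ g v) (s a : ℝ) (hs : 0 < s)
    (ha : 0 ≤ a) : Integrable (fun v : V3 => jap v ^ a * g v ^ s) := by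
  obtain ⟨k, hk⟩ := exists_nat_ge ((a + 4) / s)
  have hdec : ∃ C : ℝ, 0 ≤ C ∧ ∀ x, (1 + ‖x‖) ^ k * g x ≤ C := by
    have h : ∀ x, (1 + ‖x‖) ^ k * g x ≤
        2 ^ k * ((Finset.Iic (k, 0)).sup fun m => SchwartzMap.seminorm ℝ m.1 m.2) g := by
      intro x
      have := SchwartzMap.one_add_le_sup_seminorm_apply (𝕜 := ℝ) (m := (k, 0)) le_rfl le_rfl g x
      rw [norm_iteratedFDeriv_zero, Real.norm_of_nonneg (hg x)] at this
      exact this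
    exact ⟨_, le_trans (mul_nonneg (by positivity) (hg 0)) (h 0), h⟩
  obtain ⟨C, hC, hd⟩ := hdec
  have hint : Integrable (fun x : V3 => C ^ s * (1 + ‖x‖) ^ (-4 : ℝ)) := by
    refine (integrable_one_add_norm ?_).const_mul _
    simp; norm_num
  have hgc : Continuous fun w => g w := g.continuous
  refine hint.mono' ((continuous_jap_rpow a).mul
    (hgc.rpow_const fun _ => Or.inr hs.le)).aestronglyMeasurable (Eventually.of_forall fun v => ?_)
  have hv : 0 < 1 + ‖v‖ := by positivity
  have hgv := hg v
  have h1 := jap_pos v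
  rw [Real.norm_of_nonneg (mul_nonneg (by positivity) (by positivity))]
  have h2 : g v ≤ C * (1 + ‖v‖) ^ (-(k : ℝ)) := by
    rw [Real.rpow_neg hv.le, Real.rpow_natCast, ← div_eq_mul_inv, le_div_iff₀ (by positivity)]
    linarith [hd v]
  calc _ ≤ (1 + ‖v‖) ^ a * (C * (1 + ‖v‖) ^ (-(k : ℝ))) ^ s := by
        gcongr
        exact jap_le v
    _ = C ^ s * (1 + ‖v‖) ^ (a - k * s) := by
        rw [Real.mul_rpow hC (by positivity), ← Real.rpow_mul hv.le, mul_left_comm, ← Real.rpow_add hv]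
        congr 2; ring
    _ ≤ _ := by
        gcongr
        · linarith [norm_nonneg v]
        · rw [div_le_iff₀ hs] at hk; linarith

lemma fderiv_sq_le (L : V3 →L[ℝ] ℝ) :
    ‖L‖ ^ 2 ≤ ∑ i : Fin 3, (L (EuclideanSpace.single i 1)) ^ 2 := by
  have hn : 0 ≤ ∑ i : Fin 3, (L (EuclideanSpace.single i 1)) ^ 2 :=
    Finset.sum_nonneg fun i _ => sq_nonneg _
  have : ‖L‖ ≤ √(∑ i : Fin 3, (L (EuclideanSpace.single i 1)) ^ 2) := by
    refine ContinuousLinearMap.opNorm_le_bound _ (Real.sqrt_nonneg _) fun v => ?_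
    have hv : v = ∑ i : Fin 3, v i • EuclideanSpace.single i (1 : ℝ) := by
      ext j; simp [Finset.sum_apply, Pi.single_apply]
    have hL : L v = ∑ i : Fin 3, L (EuclideanSpace.single i 1) * v i := by
      conv_lhs => rw [hv]
      simp [map_sum, mul_comm]
    rw [EuclideanSpace.norm_eq, hL, Real.norm_eq_abs, ← Real.sqrt_mul hn]
    refine Real.abs_le_sqrt ?_
    simpa using Finset.sum_mul_sq_le_sq_mul_sq Finset.univ
      (fun i => L (EuclideanSpace.single i 1)) (fun i => v i)
  calc ‖L‖ ^ 2 ≤ _ := pow_le_pow_left₀ (norm_nonneg _) this 2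
    _ = _ := Real.sq_sqrt hn

lemma sum_le_fderiv_sq (L : V3 →L[ℝ] ℝ) :
    ∑ i : Fin 3, (L (EuclideanSpace.single i 1)) ^ 2 ≤ 3 * ‖L‖ ^ 2 := by
  have : ∀ i : Fin 3, (L (EuclideanSpace.single i 1)) ^ 2 ≤ ‖L‖ ^ 2 := by
    intro i
    have := L.le_opNorm (EuclideanSpace.single i 1)
    rw [Real.norm_eq_abs] at this
    refine sq_le_sq' ?_ ?_ <;> simp at this <;> linarith [abs_le.1 this]
  calc _ ≤ ∑ i : Fin 3, ‖L‖ ^ 2 := Finset.sum_le_sum fun i _ => this i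
    _ = _ := by simp

lemma aux_integrable_grad (g : SchwartzMap V3 ℝ) (hg : ∀ v, 0 ≤ g v) (p : ℝ) (hp : 1 < p) :
    Integrable (fun v : V3 => jap v ^ (-3 : ℝ) *
      (∑ i : Fin 3, (pd i (fun w => g w ^ (p / 2)) v) ^ 2)) := by
  obtain ⟨K, hK, hb⟩ := aux_fderiv_bound g hg p hp
  have hc := (aux_contDiff g hg p hp).continuous_fderiv one_ne_zero
  have hint := (aux_integrable g hg (p - 1) 0 (by linarith) le_rfl).const_mul (3 * K ^ 2)
  refine hint.mono' ?_ (Eventually.of_forall fun v => ?_)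
  · refine ((continuous_jap_rpow _).mul (continuous_finsetSum _ fun i _ => ?_)).aestronglyMeasurable
    unfold pd
    exact (hc.clm_apply continuous_const).pow 2
  · have hj := jap_pos v
    have hgv := hg v
    rw [Real.norm_of_nonneg (by positivity), Real.rpow_zero, one_mul]
    calc _ ≤ 1 * (3 * (K * g v ^ ((p - 1) / 2)) ^ 2) := by
          gcongr
          · exact Real.rpow_le_one_of_one_le_of_nonpos (one_le_jap v) (by norm_num)
          · refine (sum_le_fderiv_sq _).trans ?_
            gcongr
            exact hb v
      _ = _ := by
          rw [mul_pow, ← Real.rpow_natCast (g v ^ _), ← Real.rpow_mul hgv]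
          push_cast
          rw [div_mul_cancel₀ _ (two_ne_zero)]; ring

lemma aux_weight : ContDiff ℝ 1 (fun v : V3 => jap v ^ (-3 / 2 : ℝ)) ∧
    ∀ v, ‖fderiv ℝ (fun v : V3 => jap v ^ (-3 / 2 : ℝ)) v‖ ≤ 3 / 2 := by
  have he : (fun v : V3 => jap v ^ (-3 / 2 : ℝ)) = fun v : V3 => (1 + ‖v‖ ^ 2) ^ (-3 / 4 : ℝ) := by
    funext v
    unfold jap
    rw [Real.sqrt_eq_rpow, ← Real.rpow_mul (by positivity)]
    norm_num
  rw [he]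
  constructor
  · have : ContDiff ℝ 1 (fun v : V3 => 1 + ‖v‖ ^ 2) := contDiff_const.add (contDiff_norm_sq ℝ)
    exact this.rpow_const_of_ne fun v => by positivity
  · intro v
    have h1 : HasFDerivAt (fun v : V3 => 1 + ‖v‖ ^ 2) (2 • innerSL ℝ v) v :=
      (hasStrictFDerivAt_norm_sq v).hasFDerivAt.const_add 1
    have h2 := h1.rpow_const (p := (-3 / 4 : ℝ)) (Or.inl (by positivity))
    rw [h2.fderiv, norm_smul]
    have hpos : 0 < 1 + ‖v‖ ^ 2 := by positivity
    have hn : ‖(2 • innerSL ℝ v : V3 →L[ℝ] ℝ)‖ ≤ 2 * ‖v‖ := by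
      refine (norm_nsmul_le).trans ?_
      rw [innerSL_apply_norm]; norm_num
    have h3 : (1 + ‖v‖ ^ 2) ^ (-3 / 4 - 1 : ℝ) ≤ (1 + ‖v‖ ^ 2) ^ (-1 : ℝ) :=
      Real.rpow_le_rpow_of_exponent_le (by nlinarith [norm_nonneg v]) (by norm_num)
    rw [Real.rpow_neg_one] at h3
    have h4 : 0 ≤ (1 + ‖v‖ ^ 2) ^ (-3 / 4 - 1 : ℝ) := by positivity
    rw [norm_mul, Real.norm_of_nonneg h4]
    calc _ ≤ ‖(-3 / 4 : ℝ)‖ * (1 + ‖v‖ ^ 2)⁻¹ * (2 * ‖v‖) := by gcongr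
      _ = 3 / 2 * (‖v‖ / (1 + ‖v‖ ^ 2)) := by norm_num; ring
      _ ≤ 3 / 2 * 1 := by
        gcongr
        rw [div_le_one hpos]
        nlinarith [sq_nonneg (‖v‖ - 1)]
      _ = _ := by ring

lemma aux_cutoff : ∃ M : ℝ, 0 < M ∧ ∀ n : ℕ, ∃ χ : V3 → ℝ, ContDiff ℝ 1 χ ∧ HasCompactSupport χ ∧
    (∀ v, 0 ≤ χ v) ∧ (∀ v, χ v ≤ 1) ∧ (∀ v ∈ Metric.closedBall (0 : V3) n, χ v = 1) ∧
    ∀ v, ‖fderiv ℝ χ v‖ ≤ M := by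
  let b : ContDiffBump (0 : V3) := ⟨1, 2, one_pos, one_lt_two⟩
  have hb1 : ContDiff ℝ 1 b := b.contDiff
  obtain ⟨M, hM⟩ := (hb1.continuous_fderiv one_ne_zero).bounded_above_of_compact_support
    (b.hasCompactSupport.fderiv ℝ)
  refine ⟨max M 1, by positivity, fun n => ⟨fun v => b (((n : ℝ) + 1)⁻¹ • v), ?_, ?_, ?_, ?_, ?_, ?_⟩⟩
  · exact hb1.comp (contDiff_const_smul _)
  · exact b.hasCompactSupport.comp_smul (by positivity)
  · exact fun v => b.nonneg
  · exact fun v => b.le_one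
  · intro v hv
    apply b.one_of_mem_closedBall
    rw [mem_closedBall_zero_iff] at hv ⊢
    rw [norm_smul, norm_inv, Real.norm_of_nonneg (by positivity), inv_mul_le_iff₀ (by positivity)]
    change ‖v‖ ≤ ((n : ℝ) + 1) * 1
    linarith
  · intro v
    have h1 : HasFDerivAt (fun v : V3 => ((n : ℝ) + 1)⁻¹ • v)
        (((n : ℝ) + 1)⁻¹ • ContinuousLinearMap.id ℝ V3) v := 
      (((n : ℝ) + 1)⁻¹ • ContinuousLinearMap.id ℝ V3).hasFDerivAt
    have h2 := ((hb1.differentiable one_ne_zero) (((n : ℝ) + 1)⁻¹ • v)).hasFDerivAt.comp v h1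
    have h3 := h2.fderiv
    change ‖fderiv ℝ (b ∘ fun v : V3 => ((n : ℝ) + 1)⁻¹ • v) v‖ ≤ _
    rw [h3, ContinuousLinearMap.comp_smul, ContinuousLinearMap.comp_id, norm_smul]
    have h4 : ‖((n : ℝ) + 1)⁻¹‖ ≤ 1 := by
      rw [norm_inv, Real.norm_of_nonneg (by positivity)]
      apply inv_le_one_of_one_le₀; linarith [Nat.cast_nonneg (α := ℝ) n]
    calc _ ≤ 1 * M := mul_le_mul h4 (hM _) (norm_nonneg _) zero_le_one
      _ ≤ _ := by simp

lemma aux_sobolev : ∃ S : NNReal, ∀ G : V3 → ℝ, ContDiff ℝ 1 G → (∀ v, 0 ≤ G v) →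
    ∫⁻ v, ENNReal.ofReal (jap v ^ (-9 : ℝ) * G v ^ 6) ≤
      S * (∫⁻ v, ENNReal.ofReal (jap v ^ (-3 : ℝ) * (∑ i : Fin 3, (pd i G v) ^ 2) + G v ^ 2)) ^ 3 := by
  obtain ⟨M, hM, hχ⟩ := aux_cutoff
  obtain ⟨hw, hwb⟩ := aux_weight
  let S0 : NNReal := MeasureTheory.SNormLESNormFDerivOfEqConst ℝ (volume : Measure V3) ((2 : NNReal) : ℝ)
  let A : NNReal := Real.toNNReal (2 * (M + 3 / 2) ^ 2 + 2)
  refine ⟨S0 ^ 6 * A ^ 3, fun G hG hG0 => ?_⟩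
  set R := ∫⁻ v, ENNReal.ofReal (jap v ^ (-3 : ℝ) * (∑ i : Fin 3, (pd i G v) ^ 2) + G v ^ 2) with hR
  have hcov : AECover (volume : Measure V3) atTop (fun n : ℕ => Metric.closedBall (0 : V3) n) :=
    aecover_closedBall tendsto_natCast_atTop_atTop
  have hmeas : AEMeasurable (fun v : V3 => ENNReal.ofReal (jap v ^ (-9 : ℝ) * G v ^ 6)) :=
    (((continuous_jap_rpow _).mul (hG.continuous.pow 6)).measurable.ennreal_ofReal).aemeasurable
  refine le_of_tendsto' (hcov.lintegral_tendsto_of_nat hmeas) fun n => ?_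
  obtain ⟨χ, hχ1, hχc, hχ0, hχl, hχb, hχd⟩ := hχ n
  let u : V3 → ℝ := fun v => χ v * (jap v ^ (-3 / 2 : ℝ) * G v)
  have hu : ContDiff ℝ 1 u := hχ1.mul (hw.mul hG)
  have huc : HasCompactSupport u := hχc.mul_right
  have hsob := MeasureTheory.eLpNorm_le_eLpNorm_fderiv_of_eq (volume : Measure V3) hu huc
    (p := 2) (p' := 6) (by norm_num) (by simp) (by simp; norm_num)
  have h6 : ∫⁻ v, ‖u v‖ₑ ^ (6 : ℝ) ≤ S0 ^ 6 * (∫⁻ v, ‖fderiv ℝ u v‖ₑ ^ (2 : ℝ)) ^ 3 := by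
    rw [eLpNorm_eq_lintegral_rpow_enorm_toReal (by norm_num) (by simp),
      eLpNorm_eq_lintegral_rpow_enorm_toReal (by norm_num) (by simp)] at hsob
    have h7 := ENNReal.rpow_le_rpow hsob (z := 6) (by norm_num)
    rw [ENNReal.mul_rpow_of_nonneg _ _ (by norm_num), ← ENNReal.rpow_mul, ← ENNReal.rpow_mul] at h7
    simp only [ENNReal.coe_toReal, NNReal.coe_ofNat] at h7
    norm_num at h7
    exact_mod_cast h7
  have hpt : ∀ v, ‖fderiv ℝ u v‖ₑ ^ (2 : ℝ) ≤
      A * ENNReal.ofReal (jap v ^ (-3 : ℝ) * (∑ i : Fin 3, (pd i G v) ^ 2) + G v ^ 2) := by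
    intro v
    have hdχ := (hχ1.differentiable one_ne_zero v).hasFDerivAt
    have hdw := (hw.differentiable one_ne_zero v).hasFDerivAt
    have hdG := (hG.differentiable one_ne_zero v).hasFDerivAt
    have hdu := (hdχ.mul (hdw.mul hdG)).fderiv
    have hj := jap_pos v
    have hjp : 0 ≤ jap v ^ (-3 / 2 : ℝ) := by positivity
    have hj1 : jap v ^ (-3 / 2 : ℝ) ≤ 1 :=
      Real.rpow_le_one_of_one_le_of_nonpos (one_le_jap v) (by norm_num)
    have hj2 : (jap v ^ (-3 / 2 : ℝ)) ^ 2 = jap v ^ (-3 : ℝ) := by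
      rw [← Real.rpow_natCast, ← Real.rpow_mul hj.le]; norm_num
    have hGv := hG0 v
    have hbd : ‖fderiv ℝ u v‖ ≤ (M + 3 / 2) * G v + jap v ^ (-3 / 2 : ℝ) * ‖fderiv ℝ G v‖ := by
      have hχv0 := hχ0 v
      have e : fderiv ℝ u v = χ v • (jap v ^ (-3 / 2 : ℝ) • fderiv ℝ G v +
          G v • fderiv ℝ (fun v : V3 => jap v ^ (-3 / 2 : ℝ)) v) +
          (jap v ^ (-3 / 2 : ℝ) * G v) • fderiv ℝ χ v := hdu
      rw [e]
      have n1 : ‖jap v ^ (-3 / 2 : ℝ) • fderiv ℝ G v +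
          G v • fderiv ℝ (fun v : V3 => jap v ^ (-3 / 2 : ℝ)) v‖ ≤
          jap v ^ (-3 / 2 : ℝ) * ‖fderiv ℝ G v‖ + G v * (3 / 2) := by
        refine (norm_add_le _ _).trans ?_
        rw [norm_smul, norm_smul, Real.norm_of_nonneg hjp, Real.norm_of_nonneg hGv]
        gcongr
        exact hwb v
      refine (norm_add_le _ _).trans ?_
      rw [norm_smul, norm_smul, Real.norm_of_nonneg hχv0,
        Real.norm_of_nonneg (mul_nonneg hjp hGv)]
      calc _ ≤ 1 * (jap v ^ (-3 / 2 : ℝ) * ‖fderiv ℝ G v‖ + G v * (3 / 2)) + (1 * G v) * M := by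
            gcongr
            · exact hχl v
            · exact hχd v
        _ = _ := by ring
    have hsq : ‖fderiv ℝ u v‖ ^ 2 ≤ (2 * (M + 3 / 2) ^ 2 + 2) *
        (jap v ^ (-3 : ℝ) * (∑ i : Fin 3, (pd i G v) ^ 2) + G v ^ 2) := by
      have hf : ‖fderiv ℝ G v‖ ^ 2 ≤ ∑ i : Fin 3, (pd i G v) ^ 2 := fderiv_sq_le _
      have hf2 : jap v ^ (-3 : ℝ) * ‖fderiv ℝ G v‖ ^ 2 ≤
        jap v ^ (-3 : ℝ) * ∑ i : Fin 3, (pd i G v) ^ 2 := by gcongr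
      have hf3 : 0 ≤ jap v ^ (-3 : ℝ) * ‖fderiv ℝ G v‖ ^ 2 := by positivity
      calc _ ≤ ((M + 3 / 2) * G v + jap v ^ (-3 / 2 : ℝ) * ‖fderiv ℝ G v‖) ^ 2 := by gcongr
        _ ≤ 2 * (((M + 3 / 2) * G v) ^ 2 + (jap v ^ (-3 / 2 : ℝ) * ‖fderiv ℝ G v‖) ^ 2) :=
          add_sq_le
        _ = 2 * (M + 3 / 2) ^ 2 * G v ^ 2 + 2 * (jap v ^ (-3 : ℝ) * ‖fderiv ℝ G v‖ ^ 2) := by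
          rw [mul_pow, mul_pow, hj2]; ring
        _ ≤ _ := by
          have : 0 ≤ (M + 3 / 2) ^ 2 * (jap v ^ (-3 : ℝ) * ∑ i : Fin 3, (pd i G v) ^ 2) :=
            mul_nonneg (by positivity) (hf3.trans hf2)
          nlinarith [sq_nonneg (G v)]
    rw [← ofReal_norm, ENNReal.ofReal_rpow_of_nonneg (norm_nonneg _) (by norm_num)]
    change _ ≤ ENNReal.ofReal _ * _
    rw [← ENNReal.ofReal_mul (by positivity)]
    apply ENNReal.ofReal_le_ofReal
    exact_mod_cast hsq
  have hleft : ∫⁻ v in Metric.closedBall (0 : V3) n, ENNReal.ofReal (jap v ^ (-9 : ℝ) * G v ^ 6) ≤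
      ∫⁻ v, ‖u v‖ₑ ^ (6 : ℝ) := by
    refine le_trans (le_of_eq ?_) (setLIntegral_le_lintegral (Metric.closedBall (0 : V3) n) _)
    refine setLIntegral_congr_fun Metric.isClosed_closedBall.measurableSet fun v hv => ?_
    have hj := jap_pos v
    have hj2 : (jap v ^ (-3 / 2 : ℝ)) ^ 6 = jap v ^ (-9 : ℝ) := by
      rw [← Real.rpow_natCast, ← Real.rpow_mul hj.le]; norm_num
    have hGv := hG0 v
    have huv : u v = jap v ^ (-3 / 2 : ℝ) * G v := by simp only [u]; rw [hχb v hv, one_mul]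
    change _ = ‖u v‖ₑ ^ (6 : ℝ)
    rw [huv, ← ofReal_norm, ENNReal.ofReal_rpow_of_nonneg (norm_nonneg _) (by norm_num),
      Real.norm_of_nonneg (by positivity), ← hj2, ← mul_pow]
    norm_cast
  have hI : ∫⁻ v, ‖fderiv ℝ u v‖ₑ ^ (2 : ℝ) ≤ A * R := by
    rw [hR, ← lintegral_const_mul' _ _ ENNReal.coe_ne_top]
    exact lintegral_mono hpt
  calc _ ≤ _ := hleft
    _ ≤ _ := h6
    _ ≤ S0 ^ 6 * (A * R) ^ 3 := by gcongr
    _ = _ := by push_cast; ring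


/-- weighted Sobolev interpolation estimate (eq. interpolation_estimate). -/
theorem weighted_sobolev_interpolation (p r : ℝ) (hp : 1 < p)
    (hr1 : p + 2 / 3 < r) (hr2 : r < 5 * p / 3) :
    ∃ C : ℝ, 0 < C ∧
      ∀ g : SchwartzMap V3 ℝ, (∀ v, 0 ≤ g v) →
        (∫ v : V3, g v ^ r) ≤
          C * ((∫ v : V3, jap v ^ (-3 : ℝ) *
                  (∑ i : Fin 3, (pd i (fun w => g w ^ (p / 2)) v) ^ 2)) +
                (∫ v : V3, g v ^ p)) *
            (∫ v : V3, g v ^ p) ^ ((r - p - 2 / 3) / (p - 1)) *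
            (∫ v : V3, jap v ^ (9 * (p - 1) / (5 * p - 3 * r)) * g v) ^
              ((5 * p - 3 * r) / (3 * (p - 1))) := by
  obtain ⟨S, hS⟩ := aux_sobolev
  have hp1 : 0 < p - 1 := by linarith
  have hq : 0 < 5 * p - 3 * r := by linarith
  set α := 9 * (p - 1) / (5 * p - 3 * r) with hα
  set b := (r - p - 2 / 3) / (p - 1) with hb
  set c := (5 * p - 3 * r) / (3 * (p - 1)) with hc
  have hα0 : 0 < α := by positivity
  have hb0 : 0 < b := div_pos (by linarith) hp1
  have hc0 : 0 < c := by positivity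
  have hαc : α * c = 3 := by rw [hα, hc, div_mul_div_comm, div_eq_iff (by positivity)]; ring
  have hbc : 1 / 3 + b + c = 1 := by rw [hb, hc]; field_simp; ring
  have hrr : p + p * b + c = r := by rw [hb, hc]; field_simp; ring
  refine ⟨(S : ℝ) ^ (1 / 3 : ℝ) + 1, by positivity, fun g hg => ?_⟩
  have hgc : Continuous fun w => g w := g.continuous
  have iG := aux_integrable_grad g hg p hp
  have iP : Integrable (fun v : V3 => g v ^ p) := by
    simpa using aux_integrable g hg p 0 (by linarith) le_rfl
  have iZ : Integrable (fun v : V3 => jap v ^ α * g v) := by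
    simpa using aux_integrable g hg 1 α one_pos hα0.le
  have nG : ∀ v : V3, 0 ≤ jap v ^ (-3 : ℝ) * (∑ i : Fin 3, (pd i (fun w => g w ^ (p / 2)) v) ^ 2) := by
    intro v
    have := jap_pos v
    positivity
  have nP : ∀ v : V3, 0 ≤ g v ^ p := fun v => Real.rpow_nonneg (hg v) _
  have nZ : ∀ v : V3, 0 ≤ jap v ^ α * g v := fun v =>
    mul_nonneg (Real.rpow_nonneg (jap_pos v).le _) (hg v)
  set X := (∫ v : V3, jap v ^ (-3 : ℝ) * (∑ i : Fin 3, (pd i (fun w => g w ^ (p / 2)) v) ^ 2)) +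
                (∫ v : V3, g v ^ p) with hX
  set Y := ∫ v : V3, g v ^ p with hY
  set Z := ∫ v : V3, jap v ^ α * g v with hZ
  have hY0 : 0 ≤ Y := integral_nonneg nP
  have hZ0 : 0 ≤ Z := integral_nonneg nZ
  have hX0 : 0 ≤ X := add_nonneg (integral_nonneg nG) hY0
  have sob := hS (fun w => g w ^ (p / 2)) (aux_contDiff g hg p hp)
    (fun v => Real.rpow_nonneg (hg v) _)
  have e6 : ∀ v, (g v ^ (p / 2)) ^ 6 = g v ^ (3 * p) := fun v => by
    rw [← Real.rpow_natCast, ← Real.rpow_mul (hg v)]; congr 1; push_cast; ring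
  have e2 : ∀ v, (g v ^ (p / 2)) ^ 2 = g v ^ p := fun v => by
    rw [← Real.rpow_natCast, ← Real.rpow_mul (hg v)]; congr 1; push_cast; ring
  simp only [e6, e2] at sob
  have hX' : ∫⁻ v, ENNReal.ofReal (jap v ^ (-3 : ℝ) *
      (∑ i : Fin 3, (pd i (fun w => g w ^ (p / 2)) v) ^ 2) + g v ^ p) = ENNReal.ofReal X := by
    rw [hX, hY, ← integral_add iG iP]
    exact (ofReal_integral_eq_lintegral_ofReal (iG.add iP)
      (Eventually.of_forall fun v => add_nonneg (nG v) (nP v))).symm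
  rw [hX'] at sob
  have hY' : ∫⁻ v, ENNReal.ofReal (g v ^ p) = ENNReal.ofReal Y :=
    (ofReal_integral_eq_lintegral_ofReal iP (Eventually.of_forall nP)).symm
  have hZ' : ∫⁻ v, ENNReal.ofReal (jap v ^ α * g v) = ENNReal.ofReal Z :=
    (ofReal_integral_eq_lintegral_ofReal iZ (Eventually.of_forall nZ)).symm
  have cP : Continuous fun v : V3 => g v ^ p := hgc.rpow_const fun _ => Or.inr (by linarith)
  have c3P : Continuous fun v : V3 => jap v ^ (-9 : ℝ) * g v ^ (3 * p) :=
    (continuous_jap_rpow _).mul (hgc.rpow_const fun _ => Or.inr (by linarith))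
  have cZ : Continuous fun v : V3 => jap v ^ α * g v := (continuous_jap_rpow _).mul hgc
  have cR : Continuous fun v : V3 => g v ^ r := hgc.rpow_const fun _ => Or.inr (by linarith)
  have hold := ENNReal.lintegral_prod_norm_pow_le (μ := (volume : Measure V3)) (Finset.univ : Finset (Fin 3))
    (f := ![fun v => ENNReal.ofReal (jap v ^ (-9 : ℝ) * g v ^ (3 * p)),
      fun v => ENNReal.ofReal (g v ^ p), fun v => ENNReal.ofReal (jap v ^ α * g v)])
    (p := ![1 / 3, b, c])
    (by
      intro i _
      fin_cases i
      · exact c3P.measurable.ennreal_ofReal.aemeasurable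
      · exact cP.measurable.ennreal_ofReal.aemeasurable
      · exact cZ.measurable.ennreal_ofReal.aemeasurable)
    (by rw [Fin.sum_univ_three]; exact hbc)
    (by
      intro i _
      fin_cases i
      · change (0 : ℝ) ≤ 1 / 3
        norm_num
      · exact hb0.le
      · exact hc0.le)
  simp only [Fin.prod_univ_three, Matrix.cons_val_zero, Matrix.cons_val_one, Matrix.cons_val] at hold
  rw [hY', hZ'] at hold
  have hpt : ∀ v, ENNReal.ofReal (jap v ^ (-9 : ℝ) * g v ^ (3 * p)) ^ (1 / 3 : ℝ) *
      ENNReal.ofReal (g v ^ p) ^ b * ENNReal.ofReal (jap v ^ α * g v) ^ c =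
      ENNReal.ofReal (g v ^ r) := by
    intro v
    have hj := jap_pos v
    have h9 : 0 ≤ jap v ^ (-9 : ℝ) * g v ^ (3 * p) :=
      mul_nonneg (Real.rpow_nonneg hj.le _) (Real.rpow_nonneg (hg v) _)
    rw [ENNReal.ofReal_rpow_of_nonneg h9 (by norm_num),
      ENNReal.ofReal_rpow_of_nonneg (nP v) hb0.le, ENNReal.ofReal_rpow_of_nonneg (nZ v) hc0.le,
      ← ENNReal.ofReal_mul (Real.rpow_nonneg h9 _),
      ← ENNReal.ofReal_mul (mul_nonneg (Real.rpow_nonneg h9 _) (Real.rpow_nonneg (nP v) _))]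
    congr 1
    rcases (hg v).eq_or_lt with h0 | h0
    · rw [← h0, mul_zero, Real.zero_rpow hc0.ne', mul_zero, Real.zero_rpow (by linarith)]
    · rw [Real.mul_rpow (by positivity) (by positivity), Real.mul_rpow (by positivity) h0.le,
        ← Real.rpow_mul hj.le, ← Real.rpow_mul hj.le, ← Real.rpow_mul h0.le, ← Real.rpow_mul h0.le,
        hαc]
      calc _ = (jap v ^ (-9 * (1 / 3) : ℝ) * jap v ^ (3 : ℝ)) *
            (g v ^ (3 * p * (1 / 3)) * g v ^ (p * b) * g v ^ c) := by ring
        _ = 1 * g v ^ r := by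
          rw [← Real.rpow_add hj, ← Real.rpow_add h0, ← Real.rpow_add h0, ← hrr]
          congr 1
          · norm_num
          · congr 1; ring
        _ = _ := one_mul _
  simp only [hpt] at hold
  rw [integral_eq_lintegral_of_nonneg_ae (Eventually.of_forall fun v => Real.rpow_nonneg (hg v) _)
    cR.aestronglyMeasurable]
  refine ENNReal.toReal_le_of_le_ofReal (by positivity) (hold.trans ?_)
  have hs3 : (∫⁻ v, ENNReal.ofReal (jap v ^ (-9 : ℝ) * g v ^ (3 * p))) ^ (1 / 3 : ℝ) ≤
      ENNReal.ofReal (((S : ℝ) ^ (1 / 3 : ℝ) + 1) * X) := by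
    refine (ENNReal.rpow_le_rpow sob (by norm_num)).trans ?_
    rw [← ENNReal.ofReal_coe_nnreal, ← ENNReal.ofReal_pow hX0, ← ENNReal.ofReal_mul (by positivity),
      ENNReal.ofReal_rpow_of_nonneg (by positivity) (by norm_num)]
    apply ENNReal.ofReal_le_ofReal
    rw [Real.mul_rpow (by positivity) (by positivity), ← Real.rpow_natCast X, ← Real.rpow_mul hX0]
    norm_num
    linarith
  rw [ENNReal.ofReal_mul (by positivity), ENNReal.ofReal_mul (by positivity),
    ENNReal.ofReal_rpow_of_nonneg hY0 hb0.le, ENNReal.ofReal_rpow_of_nonneg hZ0 hc0.le]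
  gcongr
end
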